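/- Let g be an invertible linear endomorphism of a finite-dimensional real vector space, preserving a nondegenerate symmetric bilinear form B. Let V^< (resp. V^>, V^≤) be the sum of generalized eigenspaces for eigenvalues of modulus < 1 (resp. > 1, ≤ 1). Then V^< is B-orthogonal to V^≤, and dim V^< = dim V^>. -/

import Mathlib

open Filter Topology

/-!
On `V^<` the map `g` is a contraction after passing to a power, so its iterates decay there
geometrically, which beats the subexponential growth on `V^≤`: as `B x y = B (gⁿ x) (gⁿ y)` for all
`n`, the constant `B x y` tends to `0`.

For the dimensions, let `p` be the minimal polynomial of `g` on `V^<`. Since `Xⁿ → 0` in the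
finite-dimensional space `𝕜[X] / (p)`, every vector killed by `p(h)` is contracted by `h`, whatever
the endomorphism `h`. Take `h = g⁻¹`, the `B`-adjoint of `g`: the kernels of the mutually adjoint
maps `p(g)` and `p(g⁻¹)` have the same dimension, the first contains `V^<` and the second lies in
`V^>`. Exchanging `g` and `g⁻¹` gives the reverse inequality.
-/

open Asymptotics Module Polynomial

section LinearAlgebra

variable {K V W U : Type*} [Field K] [AddCommGroup V] [Module K V] [AddCommGroup W] [Module K W]
  [AddCommGroup U] [Module K U]

theorem exists_comp_eq_of_ker_le_ker (φ : V →ₗ[K] W) (ψ : V →ₗ[K] U)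
    (h : LinearMap.ker φ ≤ LinearMap.ker ψ) : ∃ T : W →ₗ[K] U, T ∘ₗ φ = ψ := by
  obtain ⟨s, hs⟩ := ((LinearMap.ker φ).liftQ φ le_rfl).exists_leftInverse_of_injective
    (Submodule.ker_liftQ_eq_bot _ _ _ le_rfl)
  refine ⟨(LinearMap.ker φ).liftQ ψ h ∘ₗ s, LinearMap.ext fun x ↦ ?_⟩
  have hsx : s (φ x) = (LinearMap.ker φ).mkQ x := congr($hs ((LinearMap.ker φ).mkQ x))
  simp [hsx]

theorem finrank_ker_eq_of_adjoint [FiniteDimensional K V] [FiniteDimensional K W]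
    (B : V →ₗ[K] W →ₗ[K] K) [B.IsPerfPair] {S : End K V} {T : End K W}
    (h : ∀ x y, B (S x) y = B x (T y)) :
    finrank K (LinearMap.ker S) = finrank K (LinearMap.ker T) := by
  have hcomp : T.dualMap ∘ₗ B.toPerfPair = B.toPerfPair.toLinearMap ∘ₗ S := by
    ext x y
    exact (h x y).symm
  have hrange : finrank K (LinearMap.range S) = finrank K (LinearMap.range T) := by
    rw [← T.finrank_range_dualMap_eq_finrank_range,
      ← LinearEquiv.range_comp B.toPerfPair T.dualMap, hcomp, LinearMap.range_comp]
    exact (B.toPerfPair.finrank_map_eq _).symm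
  have hV := S.finrank_range_add_finrank_ker
  have hW := T.finrank_range_add_finrank_ker
  have hVW := Module.finrank_of_isPerfPair B
  lia

theorem isPerfPair_of_separatingLeft [FiniteDimensional K V] {B : V →ₗ[K] V →ₗ[K] K}
    (hB : B.SeparatingLeft) : B.IsPerfPair := by
  have hinj : Function.Injective B :=
    LinearMap.ker_eq_bot.1 (LinearMap.separatingLeft_iff_ker_eq_bot.1 hB)
  exact .of_bijective B ⟨hinj, (LinearMap.injective_iff_surjective_of_finrank_eq_finrank
    Subspace.dual_finrank_eq.symm).1 hinj⟩

end LinearAlgebra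

section PolynomialsInEndomorphisms

variable {R M N P : Type*} [CommSemiring R] [AddCommMonoid M] [Module R M] [AddCommMonoid N]
  [Module R N] [AddCommMonoid P] [Module R P]

theorem coe_aeval_restrict_apply {f : End R M} {L : Submodule R M} (hL : ∀ x ∈ L, f x ∈ L)
    (p : R[X]) (x : L) : (aeval (f.restrict hL) p x : M) = aeval f p x := by
  induction p using Polynomial.induction_on' with
  | add p q hp hq => simp [hp, hq]
  | monomial n c => simp [aeval_monomial, End.pow_restrict n hL]

theorem apply_aeval_eq_of_adjoint (B : M →ₗ[R] N →ₗ[R] P) {f : End R M} {h : End R N}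
    (hadj : ∀ x y, B (f x) y = B x (h y)) (p : R[X]) (x : M) (y : N) :
    B (aeval f p x) y = B x (aeval h p y) := by
  have hpow (n : ℕ) : ∀ x y, B ((f ^ n) x) y = B x ((h ^ n) y) := by
    induction n with
    | zero => simp
    | succ n ih => intro x y; simp [pow_succ f, pow_succ' h, ih, hadj]
  induction p using Polynomial.induction_on' with
  | add p q hp hq => simp [hp, hq]
  | monomial n c => simp [aeval_monomial, hpow]

end PolynomialsInEndomorphisms

theorem exists_isBigO_pow_of_isTopologicallyNilpotent {R : Type*} [SeminormedRing R] {a : R}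
    (ha : IsTopologicallyNilpotent a) :
    ∃ ρ ∈ Set.Ioo (0 : ℝ) 1, (fun n : ℕ ↦ a ^ n) =O[atTop] fun n ↦ ρ ^ n := by
  have hlim : Tendsto (fun n : ℕ ↦ ‖a ^ n‖) atTop (𝓝 0) := by simpa using Tendsto.norm ha
  obtain ⟨N, hN, hN0⟩ : ∃ N : ℕ, ‖a ^ N‖ ≤ 1 / 2 ∧ N ≠ 0 :=
    ((hlim.eventually_le_const (by norm_num)).and (eventually_ne_atTop 0)).exists
  obtain ⟨C, hC⟩ : ∃ C, ∀ n : ℕ, ‖a ^ n‖ ≤ C := by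
    obtain ⟨C, hC⟩ := hlim.bddAbove_range
    exact ⟨C, fun n ↦ hC ⟨n, rfl⟩⟩
  have hblock (q r : ℕ) : ‖a ^ (N * q + r)‖ ≤ (1 / 2) ^ q * C := by
    induction q with
    | zero => simpa using hC r
    | succ q ih =>
      calc ‖a ^ (N * (q + 1) + r)‖ = ‖a ^ N * a ^ (N * q + r)‖ := by rw [← pow_add]; ring_nf
        _ ≤ ‖a ^ N‖ * ‖a ^ (N * q + r)‖ := norm_mul_le _ _
        _ ≤ 1 / 2 * ((1 / 2) ^ q * C) := by gcongr
        _ = (1 / 2) ^ (q + 1) * C := by ring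
  obtain ⟨ρ, hρ0, hρ1, hρN⟩ : ∃ ρ : ℝ, 0 < ρ ∧ ρ < 1 ∧ ρ ^ N = 1 / 2 :=
    ⟨(1 / 2) ^ (N⁻¹ : ℝ), by positivity,
      Real.rpow_lt_one (by norm_num) (by norm_num) (by positivity),
      Real.rpow_inv_natCast_pow (by norm_num) hN0⟩
  have hhalf (n : ℕ) : (1 / 2) ^ (n / N) ≤ 2 * ρ ^ n := by
    have hmod : ρ ^ N ≤ ρ ^ (n % N) :=
      pow_le_pow_of_le_one hρ0.le hρ1.le (Nat.mod_lt n (by lia)).le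
    calc (1 / 2 : ℝ) ^ (n / N) = 2 * (ρ ^ (N * (n / N)) * ρ ^ N) := by rw [pow_mul, hρN]; ring
      _ ≤ 2 * (ρ ^ (N * (n / N)) * ρ ^ (n % N)) := by gcongr
      _ = 2 * ρ ^ n := by rw [← pow_add, Nat.div_add_mod]
  refine ⟨ρ, ⟨hρ0, hρ1⟩, .of_bound (2 * C) (.of_forall fun n ↦ ?_)⟩
  have hC0 : 0 ≤ C := (norm_nonneg _).trans (hC 0)
  calc ‖a ^ n‖ = ‖a ^ (N * (n / N) + n % N)‖ := by rw [Nat.div_add_mod]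
    _ ≤ (1 / 2) ^ (n / N) * C := hblock _ _
    _ ≤ 2 * ρ ^ n * C := by gcongr; exact hhalf n
    _ = 2 * C * ‖ρ ^ n‖ := by rw [Real.norm_of_nonneg (by positivity)]; ring

/-- The space `V^<` of an endomorphism `f`, described dynamically: the vectors whose forward orbit
tends to `0`. Applied to `f⁻¹` it is the space `V^>` of `f`. -/
def contractingSubspace {R M : Type*} [Semiring R] [AddCommMonoid M] [Module R M]
    [TopologicalSpace M] [ContinuousAdd M] [ContinuousConstSMul R M] (f : End R M) :
    Submodule R M where
  carrier := {x | Tendsto (fun n : ℕ ↦ (f ^ n) x) atTop (𝓝 0)}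
  add_mem' hx hy := by simpa using Tendsto.add hx hy
  zero_mem' := by simpa using tendsto_const_nhds
  smul_mem' c x hx := by simpa using Tendsto.const_smul hx c

/-- The space `V^≤` of an endomorphism `f`, described dynamically: the vectors whose forward orbit
grows more slowly than every exponential `rⁿ` with `1 < r`. -/
def subexponentialSubspace {𝕜 V : Type*} [NormedField 𝕜] [SeminormedAddCommGroup V]
    [NormedSpace 𝕜 V] (f : End 𝕜 V) : Submodule 𝕜 V where
  carrier := {x | ∀ r : ℝ, 1 < r → (fun n : ℕ ↦ (f ^ n) x) =o[atTop] fun n ↦ r ^ n}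
  add_mem' hx hy r hr := by simpa using (hx r hr).add (hy r hr)
  zero_mem' r _ := by simpa using isLittleO_zero _ _
  smul_mem' c x hx r hr := by simpa [Pi.smul_def] using (hx r hr).const_smul_left c

theorem apply_mem_contractingSubspace {R M : Type*} [Semiring R] [AddCommMonoid M] [Module R M]
    [TopologicalSpace M] [ContinuousAdd M] [ContinuousConstSMul R M] {f : End R M} {x : M}
    (hx : x ∈ contractingSubspace f) : f x ∈ contractingSubspace f :=
  (hx.comp (tendsto_add_atTop_nat 1)).congr fun n ↦ by simp [pow_succ]

theorem contractingSubspace_restrict {R M : Type*} [Ring R] [TopologicalSpace R]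
    [AddCommGroup M] [Module R M] [TopologicalSpace M] [IsTopologicalAddGroup M]
    [ContinuousSMul R M] (f : End R M) :
    contractingSubspace (f.restrict fun _ ↦ apply_mem_contractingSubspace (f := f)) = ⊤ := by
  refine eq_top_iff.2 fun x _ ↦ tendsto_subtype_rng.2 ?_
  exact x.2.congr fun n ↦ by rw [End.pow_restrict]; rfl

theorem mem_subexponentialSubspace_iff_tendsto {V : Type*} [SeminormedAddCommGroup V]
    [NormedSpace ℝ V] {f : End ℝ V} {x : V} :
    x ∈ subexponentialSubspace f ↔
      ∀ r : ℝ, 1 < r → Tendsto (fun n : ℕ ↦ (r ^ n)⁻¹ • (f ^ n) x) atTop (𝓝 0) := by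
  refine forall₂_congr fun r hr ↦ ?_
  have hr0 : ∀ n : ℕ, r ^ n ≠ 0 := fun n ↦ (pow_pos (one_pos.trans hr) n).ne'
  rw [← isLittleOTVS_iff_isLittleO (𝕜 := ℝ), isLittleOTVS_iff_tendsto_inv_smul]
  simp [hr0]

section Dimension

variable {𝕜 V W : Type*} [NontriviallyNormedField 𝕜] [CompleteSpace 𝕜]
  [AddCommGroup V] [Module 𝕜 V] [TopologicalSpace V] [IsTopologicalAddGroup V]
  [ContinuousSMul 𝕜 V] [T2Space V] [FiniteDimensional 𝕜 V]
  [AddCommGroup W] [Module 𝕜 W] [TopologicalSpace W] [IsTopologicalAddGroup W]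
  [ContinuousSMul 𝕜 W]

theorem mem_contractingSubspace_of_aeval_minpoly_apply_eq_zero {f : End 𝕜 V}
    (hf : contractingSubspace f = ⊤) {h : End 𝕜 W} {y : W} (hy : aeval h (minpoly 𝕜 f) y = 0) :
    y ∈ contractingSubspace h := by
  let b := finBasis 𝕜 V
  let φ : 𝕜[X] →ₗ[𝕜] Fin (finrank 𝕜 V) → V :=
    .pi fun i ↦ LinearMap.applyₗ (b i) ∘ₗ (aeval f).toLinearMap
  let ψ : 𝕜[X] →ₗ[𝕜] W := LinearMap.applyₗ y ∘ₗ (aeval h).toLinearMap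
  have hker : LinearMap.ker φ ≤ LinearMap.ker ψ := by
    intro q hq
    have hqf : aeval f q = 0 := b.ext fun i ↦ congr($hq i)
    obtain ⟨s, rfl⟩ := minpoly.dvd 𝕜 f hqf
    simp [ψ, mul_comm (minpoly 𝕜 f) s, hy]
  obtain ⟨T, hT⟩ := exists_comp_eq_of_ker_le_ker φ ψ hker
  have hφ : Tendsto (fun n : ℕ ↦ φ (X ^ n)) atTop (𝓝 0) := by
    refine tendsto_pi_nhds.2 fun i ↦ ?_
    have hbi : Tendsto (fun n : ℕ ↦ (f ^ n) (b i)) atTop (𝓝 0) :=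
      (hf ▸ Submodule.mem_top : b i ∈ contractingSubspace f)
    simpa [φ] using hbi
  have hTφ : Tendsto (fun n : ℕ ↦ T (φ (X ^ n))) atTop (𝓝 0) := by
    simpa [Function.comp_def] using (T.continuous_of_finiteDimensional.tendsto 0).comp hφ
  refine hTφ.congr fun n ↦ ?_
  rw [← LinearMap.comp_apply, hT]
  simp [ψ]

variable [FiniteDimensional 𝕜 W] (B : V →ₗ[𝕜] W →ₗ[𝕜] 𝕜) [B.IsPerfPair]
  {f : End 𝕜 V} {h : End 𝕜 W}

theorem finrank_contractingSubspace_le_of_adjoint (hadj : ∀ x y, B (f x) y = B x (h y)) :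
    finrank 𝕜 (contractingSubspace f) ≤ finrank 𝕜 (contractingSubspace h) := by
  let p := minpoly 𝕜 (f.restrict fun _ ↦ apply_mem_contractingSubspace (f := f))
  have hle : contractingSubspace f ≤ LinearMap.ker (aeval f p) := by
    intro x hx
    have hp := coe_aeval_restrict_apply (f := f) (fun _ ↦ apply_mem_contractingSubspace) p ⟨x, hx⟩
    rw [minpoly.aeval] at hp
    exact hp.symm
  have hge : LinearMap.ker (aeval h p) ≤ contractingSubspace h := fun _ hy ↦
    mem_contractingSubspace_of_aeval_minpoly_apply_eq_zero (contractingSubspace_restrict f) hy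
  calc finrank 𝕜 (contractingSubspace f)
      ≤ finrank 𝕜 (LinearMap.ker (aeval f p)) := Submodule.finrank_mono hle
    _ = finrank 𝕜 (LinearMap.ker (aeval h p)) :=
      finrank_ker_eq_of_adjoint B (apply_aeval_eq_of_adjoint B hadj p)
    _ ≤ finrank 𝕜 (contractingSubspace h) := Submodule.finrank_mono hge

theorem finrank_contractingSubspace_eq_of_adjoint [T2Space W]
    (hadj : ∀ x y, B (f x) y = B x (h y)) :
    finrank 𝕜 (contractingSubspace f) = finrank 𝕜 (contractingSubspace h) :=
  (finrank_contractingSubspace_le_of_adjoint B hadj).antisymm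
    (finrank_contractingSubspace_le_of_adjoint B.flip fun y x ↦ (hadj x y).symm)

end Dimension

section Orthogonality

variable {𝕜 V W F : Type*} [NontriviallyNormedField 𝕜] [CompleteSpace 𝕜]
  [NormedAddCommGroup V] [NormedSpace 𝕜 V] [FiniteDimensional 𝕜 V]
  [SeminormedAddCommGroup W] [NormedSpace 𝕜 W] [NormedAddCommGroup F] [NormedSpace 𝕜 F]

theorem isTopologicallyNilpotent_toContinuousLinearMap {f : End 𝕜 V}
    (hf : contractingSubspace f = ⊤) :
    IsTopologicallyNilpotent (End.toContinuousLinearMap V f) := by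
  let b := finBasis 𝕜 V
  let T : (Fin (finrank 𝕜 V) → V) →ₗ[𝕜] (V →L[𝕜] V) :=
    LinearMap.toContinuousLinearMap.toLinearMap ∘ₗ (b.constr 𝕜).toLinearMap
  have hb : Tendsto (fun (n : ℕ) i ↦ (f ^ n) (b i)) atTop (𝓝 0) :=
    tendsto_pi_nhds.2 fun i ↦ (hf ▸ Submodule.mem_top : b i ∈ contractingSubspace f)
  have hT : Tendsto (fun n : ℕ ↦ T fun i ↦ (f ^ n) (b i)) atTop (𝓝 0) := by
    simpa [Function.comp_def] using (T.continuous_of_finiteDimensional.tendsto 0).comp hb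
  refine hT.congr fun n ↦ ?_
  rw [← map_pow]
  exact congr(LinearMap.toContinuousLinearMap $(b.constr_eq 𝕜 fun i ↦ rfl))

theorem exists_isBigO_pow_of_mem_contractingSubspace {f : End 𝕜 V} {x : V}
    (hx : x ∈ contractingSubspace f) :
    ∃ ρ ∈ Set.Ioo (0 : ℝ) 1, (fun n : ℕ ↦ (f ^ n) x) =O[atTop] fun n ↦ ρ ^ n := by
  obtain ⟨ρ, hρ, hO⟩ := exists_isBigO_pow_of_isTopologicallyNilpotent
    (isTopologicallyNilpotent_toContinuousLinearMap (contractingSubspace_restrict f))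
  refine ⟨ρ, hρ, ?_⟩
  let ev := (contractingSubspace f).subtypeL ∘L
    ContinuousLinearMap.apply 𝕜 _ (⟨x, hx⟩ : contractingSubspace f)
  refine ((ev.isBigO_comp _ _).trans hO).congr_left fun n ↦ ?_
  rw [← map_pow, End.pow_restrict]
  rfl

theorem apply_eq_zero_of_mem_contractingSubspace (B : V →L[𝕜] W →L[𝕜] F) {f : End 𝕜 V}
    {h : End 𝕜 W} (hB : ∀ x y, B (f x) (h y) = B x y) {x : V} (hx : x ∈ contractingSubspace f)
    {y : W} (hy : y ∈ subexponentialSubspace h) : B x y = 0 := by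
  have hinv (n : ℕ) : B ((f ^ n) x) ((h ^ n) y) = B x y := by
    induction n with
    | zero => simp
    | succ n ih => simp [pow_succ', hB, ih]
  obtain ⟨ρ, ⟨hρ0, hρ1⟩, hxO⟩ := exists_isBigO_pow_of_mem_contractingSubspace hx
  have hyo := hy ρ⁻¹ ((one_lt_inv₀ hρ0).2 hρ1)
  have hBo : (fun n : ℕ ↦ B ((f ^ n) x) ((h ^ n) y)) =o[atTop] fun _ ↦ (1 : ℝ) :=
    (B.isBoundedBilinearMap.isBigO_comp.trans_isLittleO
      (hxO.norm_left.mul_isLittleO hyo.norm_left)).congr_right fun n ↦ by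
        rw [← mul_pow, mul_inv_cancel₀ hρ0.ne', one_pow]
  simpa [hinv, isLittleO_one_iff, tendsto_const_nhds_iff] using hBo

end Orthogonality

theorem form_preserving_eigenspace_orthogonality_general {𝕜 V : Type*}
    [NontriviallyNormedField 𝕜] [CompleteSpace 𝕜] [NormedAddCommGroup V] [NormedSpace 𝕜 V]
    [FiniteDimensional 𝕜 V] (g : V ≃ₗ[𝕜] V) (B : V →ₗ[𝕜] V →ₗ[𝕜] 𝕜) (hnd : B.SeparatingLeft)
    (hinv : ∀ x y, B (g x) (g y) = B x y) :
    (∀ x ∈ contractingSubspace (g : End 𝕜 V), ∀ y ∈ subexponentialSubspace (g : End 𝕜 V),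
      B x y = 0) ∧
    finrank 𝕜 (contractingSubspace (g : End 𝕜 V)) =
      finrank 𝕜 (contractingSubspace (g.symm : End 𝕜 V)) := by
  have := isPerfPair_of_separatingLeft hnd
  refine ⟨fun x hx y hy ↦ ?_, finrank_contractingSubspace_eq_of_adjoint B fun x y ↦ ?_⟩
  · exact apply_eq_zero_of_mem_contractingSubspace B.toContinuousBilinearMap hinv hx hy
  · simpa using hinv x (g.symm y)

/-- Let `g` be an invertible linear map of a finite-dimensional real vector space preserving
a nondegenerate symmetric bilinear form `B`.  Let `V^<` (resp. `V^>`, `V^≤`) be the sum of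
generalized eigenspaces for eigenvalues of modulus `< 1` (resp. `> 1`, `≤ 1`), characterized
dynamically: `V^< = {x | gⁿ x → 0}`, `V^> = {x | g⁻ⁿ x → 0}`, and
`V^≤ = {x | gⁿ x grows subexponentially}`.  Then `V^<` is `B`-orthogonal to `V^≤`, and
`dim V^< = dim V^>`. -/
theorem form_preserving_eigenspace_orthogonality
    {V : Type*} [NormedAddCommGroup V] [NormedSpace ℝ V] [FiniteDimensional ℝ V]
    (g : V ≃ₗ[ℝ] V) (B : V →ₗ[ℝ] V →ₗ[ℝ] ℝ)
    (hsymm : ∀ x y, B x y = B y x)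
    (hnd : ∀ x, (∀ y, B x y = 0) → x = 0)
    (hinv : ∀ x y, B (g x) (g y) = B x y)
    (Vlt Vgt Vle : Submodule ℝ V)
    (hlt : ∀ x, x ∈ Vlt ↔
      Tendsto (fun n : ℕ => ((g : V →ₗ[ℝ] V) ^ n) x) atTop (𝓝 0))
    (hgt : ∀ x, x ∈ Vgt ↔
      Tendsto (fun n : ℕ => ((g.symm : V →ₗ[ℝ] V) ^ n) x) atTop (𝓝 0))
    (hle : ∀ x, x ∈ Vle ↔ ∀ r : ℝ, 1 < r →
      Tendsto (fun n : ℕ => (r ^ n)⁻¹ • ((g : V →ₗ[ℝ] V) ^ n) x) atTop (𝓝 0)) :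
    (∀ x ∈ Vlt, ∀ y ∈ Vle, B x y = 0) ∧
    Module.finrank ℝ Vlt = Module.finrank ℝ Vgt := by
  obtain rfl : Vlt = contractingSubspace (g : End ℝ V) := Submodule.ext hlt
  obtain rfl : Vgt = contractingSubspace (g.symm : End ℝ V) := Submodule.ext hgt
  obtain rfl : Vle = subexponentialSubspace (g : End ℝ V) :=
    Submodule.ext fun x ↦ (hle x).trans mem_subexponentialSubspace_iff_tendsto.symm
  exact form_preserving_eigenspace_orthogonality_general g B hnd hinv
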